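/- arXiv:2108.11825 — 3 statements merged into one kernel-verified Lean document; each statement's English description precedes it below -/
import Mathlib

section
/- Let λ ∈ ℝ and 0 < x₀ < π/2. Suppose g : ℝ → ℝ is twice continuously differentiable on [0, x₀], g(x) ≥ 0 for all x ∈ [0, x₀], g(x) > 0 for all x ∈ (0, x₀), and g''(x) + (λ / cos(x)²)·g(x) ≤ 0 for all x ∈ [0, x₀]. Suppose f : ℝ → ℝ is twice continuously differentiable on [0, x₀] and satisfies f''(x) + (λ / cos(x)²)·f(x) = 0 for all x ∈ [0, x₀], with f(0) = 0 and f'(0) = 1. Then f has no zero in the open interval (0, x₀), i.e. f(x) ≠ 0 for every x with 0 < x < x₀. -/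
theorem aux_C2 (x₀ : ℝ) (hx₀ : 0 < x₀) (g : ℝ → ℝ)
    (hg : ContDiffOn ℝ 2 g (Set.Icc 0 x₀)) :
    ContinuousOn (derivWithin g (Set.Icc 0 x₀)) (Set.Icc 0 x₀) ∧
    ∀ x ∈ Set.Ioo 0 x₀, HasDerivAt g (derivWithin g (Set.Icc 0 x₀) x) x ∧
      HasDerivAt (derivWithin g (Set.Icc 0 x₀)) (deriv (deriv g) x) x := by
  refine ⟨hg.continuousOn_derivWithin (uniqueDiffOn_Icc hx₀) (by norm_num), ?_⟩
  intro x hx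
  have key : ∀ y ∈ Set.Ioo 0 x₀, derivWithin g (Set.Icc 0 x₀) y = deriv g y := fun y hy =>
    derivWithin_of_mem_nhds (Icc_mem_nhds hy.1 hy.2)
  have hc : ContDiffAt ℝ 2 g x := hg.contDiffAt (Icc_mem_nhds hx.1 hx.2)
  constructor
  · rw [key x hx]
    exact (hc.differentiableAt (by norm_num)).hasDerivAt
  · have hG : ContDiffOn ℝ 1 (derivWithin g (Set.Icc 0 x₀)) (Set.Icc 0 x₀) :=
      hg.derivWithin (uniqueDiffOn_Icc hx₀) (by norm_num)
    have h1 : DifferentiableAt ℝ (derivWithin g (Set.Icc 0 x₀)) x :=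
      (hG.contDiffAt (Icc_mem_nhds hx.1 hx.2)).differentiableAt (by norm_num)
    have h2 : derivWithin g (Set.Icc 0 x₀) =ᶠ[nhds x] deriv g := by
      filter_upwards [Ioo_mem_nhds hx.1 hx.2] with y hy using key y hy
    rw [← h2.deriv_eq]
    exact h1.hasDerivAt

/-- Theorem G.3: Sturm-comparison nonvanishing theorem for
`-f'' - (λ / cos² x) f = 0` on `[0, x₀]`. -/
theorem sturm_nonvanishing (lam x₀ : ℝ) (hx₀ : 0 < x₀) (hx₀' : x₀ < Real.pi / 2)
    (g f : ℝ → ℝ)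
    (hg : ContDiffOn ℝ 2 g (Set.Icc 0 x₀))
    (hg_nonneg : ∀ x ∈ Set.Icc 0 x₀, 0 ≤ g x)
    (hg_pos : ∀ x ∈ Set.Ioo 0 x₀, 0 < g x)
    (hg_ineq : ∀ x ∈ Set.Icc 0 x₀,
      deriv (deriv g) x + (lam / (Real.cos x) ^ 2) * g x ≤ 0)
    (hf : ContDiffOn ℝ 2 f (Set.Icc 0 x₀))
    (hf_eq : ∀ x ∈ Set.Icc 0 x₀,
      deriv (deriv f) x + (lam / (Real.cos x) ^ 2) * f x = 0)
    (hf0 : f 0 = 0) (hf'0 : deriv f 0 = 1) :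
    ∀ x ∈ Set.Ioo 0 x₀, f x ≠ 0 := by
  intro x₁ hx₁ hfx₁
  obtain ⟨hGc, hGd⟩ := aux_C2 x₀ hx₀ g hg
  obtain ⟨hFc, hFd⟩ := aux_C2 x₀ hx₀ f hf
  have hfd0 : DifferentiableAt ℝ f 0 := by
    by_contra h
    rw [deriv_zero_of_not_differentiableAt h] at hf'0
    norm_num at hf'0
  have hF0 : derivWithin f (Set.Icc 0 x₀) 0 = 1 := by
    rw [← hf'0]
    exact hfd0.derivWithin (uniqueDiffOn_Icc hx₀ 0 ⟨le_rfl, hx₀.le⟩)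
  set F := derivWithin f (Set.Icc 0 x₀) with hF
  set G := derivWithin g (Set.Icc 0 x₀) with hG
  -- positivity near zero
  obtain ⟨δ, hδ, hδpos⟩ : ∃ δ > 0, ∀ y, 0 < y → y < δ → 0 < f y := by
    have h := hfd0.hasDerivAt.tendsto_slope
    rw [hf'0] at h
    have h2 := h.eventually (lt_mem_nhds (zero_lt_one))
    rw [eventually_nhdsWithin_iff, Metric.eventually_nhds_iff] at h2
    obtain ⟨δ, hδ, h3⟩ := h2
    refine ⟨δ, hδ, fun y hy hyδ => ?_⟩
    have h4 := h3 (y := y) (by simpa [abs_of_pos hy] using hyδ) (by simpa using hy.ne')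
    rw [slope_def_field, hf0, sub_zero, sub_zero] at h4
    exact (div_pos_iff_of_pos_right hy).1 h4
  have hx₁δ : δ ≤ x₁ := by
    by_contra! h
    exact (hδpos x₁ hx₁.1 h).ne' hfx₁
  have hfc : ContinuousOn f (Set.Icc 0 x₀) := hf.continuousOn
  have hgc : ContinuousOn g (Set.Icc 0 x₀) := hg.continuousOn
  have hcomp : IsCompact (Set.Icc δ x₁ ∩ f ⁻¹' {0}) := by
    refine isCompact_Icc.of_isClosed_subset ?_ Set.inter_subset_left
    exact (hfc.mono (Set.Icc_subset_Icc hδ.le hx₁.2.le)).preimage_isClosed_of_isClosed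
      isClosed_Icc isClosed_singleton
  obtain ⟨a, ⟨⟨haδ, hax⟩, hfa⟩, hmin⟩ := hcomp.exists_isLeast ⟨x₁, ⟨hx₁δ, le_rfl⟩, hfx₁⟩
  have hfa : f a = 0 := hfa
  have ha0 : 0 < a := hδ.trans_le haδ
  have hax₀ : a < x₀ := hax.trans_lt hx₁.2
  have hfpos : ∀ y, 0 < y → y < a → 0 < f y := by
    intro y hy hya
    by_contra! hneg
    have hyδ : δ ≤ y := by
      by_contra! h
      exact absurd (hδpos y hy h) (not_lt.2 hneg)
    have hpos := hδpos (δ/2) (by linarith) (by linarith)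
    obtain ⟨z, hz, hz0⟩ := intermediate_value_Icc' (a := δ/2) (b := y) (by linarith)
      (hfc.mono (Set.Icc_subset_Icc (by linarith) (by linarith))) ⟨hneg, hpos.le⟩
    have hzδ : δ ≤ z := by
      by_contra! h
      exact (hδpos z (by linarith [hz.1]) h).ne' hz0
    have := hmin ⟨⟨hzδ, by linarith [hz.2]⟩, hz0⟩
    linarith [hz.2]
  have hsub : Set.Icc 0 a ⊆ Set.Icc 0 x₀ := Set.Icc_subset_Icc le_rfl hax₀.le
  have hW : MonotoneOn (fun x => g x * F x - G x * f x) (Set.Icc 0 a) := by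
    have hd : ∀ x ∈ Set.Ioo 0 a, HasDerivAt (fun x => g x * F x - G x * f x)
        ((G x * F x + g x * deriv (deriv f) x) - (deriv (deriv g) x * f x + G x * F x)) x := by
      intro x hx
      have hx' : x ∈ Set.Ioo 0 x₀ := ⟨hx.1, hx.2.trans hax₀⟩
      exact ((hGd x hx').1.mul (hFd x hx').2).sub ((hGd x hx').2.mul (hFd x hx').1)
    refine monotoneOn_of_deriv_nonneg (convex_Icc _ _)
      (((hgc.mul hFc).sub (hGc.mul hfc)).mono hsub) ?_ ?_
    · rw [interior_Icc]
      exact fun x hx => (hd x hx).differentiableAt.differentiableWithinAt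
    · rw [interior_Icc]
      intro x hx
      rw [(hd x hx).deriv]
      have hx' : x ∈ Set.Icc 0 x₀ := ⟨hx.1.le, (hx.2.trans hax₀).le⟩
      have e1 := hf_eq x hx'
      have e2 := mul_nonneg (neg_nonneg.2 (hg_ineq x hx')) (hfpos x hx.1 hx.2).le
      linear_combination e2 - g x * e1
  have hW0 : ∀ x ∈ Set.Icc 0 a, 0 ≤ g x * F x - G x * f x := by
    intro x hx
    have h := hW ⟨le_rfl, ha0.le⟩ hx hx.1
    simp only [hF0, hf0] at h
    have := hg_nonneg 0 ⟨le_rfl, hx₀.le⟩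
    linarith
  have hmem : ∀ x ∈ Set.Icc (a/2) a, x ∈ Set.Ioo 0 x₀ := fun x hx =>
    ⟨by linarith [hx.1], by linarith [hx.2]⟩
  have hQ : MonotoneOn (fun x => f x / g x) (Set.Icc (a/2) a) := by
    have hd : ∀ x ∈ Set.Icc (a/2) a, HasDerivAt (fun x => f x / g x)
        ((F x * g x - f x * G x) / g x ^ 2) x := fun x hx =>
      (hFd x (hmem x hx)).1.div (hGd x (hmem x hx)).1 (hg_pos x (hmem x hx)).ne'
    refine monotoneOn_of_deriv_nonneg (convex_Icc _ _)
      (fun x hx => (hd x hx).continuousAt.continuousWithinAt) 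
      (fun x hx => (hd x (interior_subset hx)).differentiableAt.differentiableWithinAt) ?_
    intro x hx
    have hx := interior_subset hx
    rw [(hd x hx).deriv]
    refine div_nonneg ?_ (sq_nonneg _)
    have := hW0 x ⟨(hmem x hx).1.le, hx.2⟩
    linarith
  have h1 := hQ ⟨le_rfl, by linarith⟩ ⟨by linarith, le_rfl⟩ (by linarith : a/2 ≤ a)
  simp only [hfa, zero_div] at h1
  have h2 := div_pos (hfpos (a/2) (by linarith) (by linarith))
    (hg_pos (a/2) (hmem _ ⟨le_rfl, by linarith⟩))
  linarith
end

section
/- Let B be the group with presentation ⟨r, s, t | r⁵ = s² = t² = 1, (r·t)² = 1, (s·t)² = 1, (r·s)⁴ = 1, (s·r³·s·r²)² = 1⟩. Then B is isomorphic as a group to S₅ × ℤ/2ℤ (the product of the symmetric group on five letters with the cyclic group of order 2); in particular B has order 240. -/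
namespace BringStmt9

def r : FreeGroup (Fin 3) := FreeGroup.of 0
def s : FreeGroup (Fin 3) := FreeGroup.of 1
def t : FreeGroup (Fin 3) := FreeGroup.of 2

/-- Relators of the presentation of the full symmetry group of Bring's surface. -/
def bringRels : Set (FreeGroup (Fin 3)) :=
  { r ^ 5, s ^ 2, t ^ 2, (r * t) ^ 2, (s * t) ^ 2, (r * s) ^ 4,
    (s * r ^ 3 * s * r ^ 2) ^ 2 }

/-- The full symmetry group of Bring's surface. -/
abbrev BringGroup := PresentedGroup bringRels

/-- Coset enumeration: an orbit map with base point fixed by `r` and `t` has at most 24 points. -/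
theorem enum {G X : Type*} [Group G] [MulAction G X] (r s t : G)
    (hs : s * (s) = 1)
    (ht : t * (t) = 1)
    (hrt : r * (t * (r * (t))) = 1)
    (hst : s * (t * (s * (t))) = 1)
    (hrs : r * (s * (r * (s * (r * (s * (r * (s))))))) = 1)
    (hr : r * (r * (r * (r * (r)))) = 1)
    (hu : s * (r * (r * (r * (s * (r * (r * (s * (r * (r * (r * (s * (r * (r))))))))))))) = 1)
    (x0 : X) (r0 : r • x0 = x0) (t0 : t • x0 = x0) :
    ∃ l : List X, l.length = 24 ∧ x0 ∈ l ∧ (∀ y ∈ l, r • y ∈ l) ∧ (∀ y ∈ l, s • y ∈ l) ∧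
      (∀ y ∈ l, t • y ∈ l) := by
  have hrt1 : t * (r * (t * (r))) = 1 := by
    simpa only [mul_assoc] using mul_eq_one_comm.mp hrt
  have hst1 : t * (s * (t * (s))) = 1 := by
    simpa only [mul_assoc] using mul_eq_one_comm.mp hst
  have hrs1 : s * (r * (s * (r * (s * (r * (s * (r))))))) = 1 := by
    simpa only [mul_assoc] using mul_eq_one_comm.mp hrs
  have hu1 : r * (r * (r * (s * (r * (r * (s * (r * (r * (r * (s * (r * (r * (s))))))))))))) = 1 := by
    simpa only [mul_assoc] using mul_eq_one_comm.mp hu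
  have hu2 : r * (r * (s * (r * (r * (s * (r * (r * (r * (s * (r * (r * (s * (r))))))))))))) = 1 := by
    simpa only [mul_assoc] using mul_eq_one_comm.mp hu1
  have hu3 : r * (s * (r * (r * (s * (r * (r * (r * (s * (r * (r * (s * (r * (r))))))))))))) = 1 := by
    simpa only [mul_assoc] using mul_eq_one_comm.mp hu2
  have hu4 : s * (r * (r * (s * (r * (r * (r * (s * (r * (r * (s * (r * (r * (r))))))))))))) = 1 := by
    simpa only [mul_assoc] using mul_eq_one_comm.mp hu3
  have hu5 : r * (r * (s * (r * (r * (r * (s * (r * (r * (s * (r * (r * (r * (s))))))))))))) = 1 := by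
    simpa only [mul_assoc] using mul_eq_one_comm.mp hu4
  have hu6 : r * (s * (r * (r * (r * (s * (r * (r * (s * (r * (r * (r * (s * (r))))))))))))) = 1 := by
    simpa only [mul_assoc] using mul_eq_one_comm.mp hu5
  obtain ⟨x1, s0⟩ : ∃ y, s • x0 = y := ⟨_, rfl⟩
  obtain ⟨x2, r1⟩ : ∃ y, r • x1 = y := ⟨_, rfl⟩
  obtain ⟨x3, r2⟩ : ∃ y, r • x2 = y := ⟨_, rfl⟩
  obtain ⟨x4, s2⟩ : ∃ y, s • x2 = y := ⟨_, rfl⟩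
  obtain ⟨x5, t2⟩ : ∃ y, t • x2 = y := ⟨_, rfl⟩
  obtain ⟨x6, r3⟩ : ∃ y, r • x3 = y := ⟨_, rfl⟩
  obtain ⟨x7, s3⟩ : ∃ y, s • x3 = y := ⟨_, rfl⟩
  obtain ⟨x8, r4⟩ : ∃ y, r • x4 = y := ⟨_, rfl⟩
  obtain ⟨x9, s6⟩ : ∃ y, s • x6 = y := ⟨_, rfl⟩
  obtain ⟨x10, r7⟩ : ∃ y, r • x7 = y := ⟨_, rfl⟩
  obtain ⟨x11, r8⟩ : ∃ y, r • x8 = y := ⟨_, rfl⟩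
  obtain ⟨x12, r9⟩ : ∃ y, r • x9 = y := ⟨_, rfl⟩
  obtain ⟨x13, r10⟩ : ∃ y, r • x10 = y := ⟨_, rfl⟩
  obtain ⟨x14, s10⟩ : ∃ y, s • x10 = y := ⟨_, rfl⟩
  obtain ⟨x15, r11⟩ : ∃ y, r • x11 = y := ⟨_, rfl⟩
  obtain ⟨x16, s11⟩ : ∃ y, s • x11 = y := ⟨_, rfl⟩
  obtain ⟨x17, t11⟩ : ∃ y, t • x11 = y := ⟨_, rfl⟩
  obtain ⟨x18, s12⟩ : ∃ y, s • x12 = y := ⟨_, rfl⟩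
  obtain ⟨x19, s13⟩ : ∃ y, s • x13 = y := ⟨_, rfl⟩
  obtain ⟨x20, r14⟩ : ∃ y, r • x14 = y := ⟨_, rfl⟩
  obtain ⟨x21, s15⟩ : ∃ y, s • x15 = y := ⟨_, rfl⟩
  obtain ⟨x22, r19⟩ : ∃ y, r • x19 = y := ⟨_, rfl⟩
  obtain ⟨x23, s22⟩ : ∃ y, s • x22 = y := ⟨_, rfl⟩
  have s1 : s • x1 = x0 := by
    simpa only [mul_smul, one_smul, s0] using congrArg (· • x0) hs
  have s4 : s • x4 = x2 := by
    simpa only [mul_smul, one_smul, s2] using congrArg (· • x2) hs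
  have s7 : s • x7 = x3 := by
    simpa only [mul_smul, one_smul, s3] using congrArg (· • x3) hs
  have s9 : s • x9 = x6 := by
    simpa only [mul_smul, one_smul, s6] using congrArg (· • x6) hs
  have s14 : s • x14 = x10 := by
    simpa only [mul_smul, one_smul, s10] using congrArg (· • x10) hs
  have s16 : s • x16 = x11 := by
    simpa only [mul_smul, one_smul, s11] using congrArg (· • x11) hs
  have s18 : s • x18 = x12 := by
    simpa only [mul_smul, one_smul, s12] using congrArg (· • x12) hs
  have s19 : s • x19 = x13 := by
    simpa only [mul_smul, one_smul, s13] using congrArg (· • x13) hs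
  have s21 : s • x21 = x15 := by
    simpa only [mul_smul, one_smul, s15] using congrArg (· • x15) hs
  have s23 : s • x23 = x22 := by
    simpa only [mul_smul, one_smul, s22] using congrArg (· • x22) hs
  have t5 : t • x5 = x2 := by
    simpa only [mul_smul, one_smul, t2] using congrArg (· • x2) ht
  have t17 : t • x17 = x11 := by
    simpa only [mul_smul, one_smul, t11] using congrArg (· • x11) ht
  have t1 : t • x1 = x1 := by
    simpa only [mul_smul, one_smul, s1, t0, s0] using congrArg (· • x1) hst1
  have r5 : r • x5 = x1 := by
    simpa only [mul_smul, one_smul, t1, r1, t2] using congrArg (· • x1) hrt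
  have s8 : s • x8 = x5 := by
    simpa only [mul_smul, one_smul, r5, s1, r0, s0, r1, s2, r4] using congrArg (· • x5) hrs1
  have r6 : r • x6 = x5 := by
    simpa only [mul_smul, one_smul, r5, r1, r2, r3] using congrArg (· • x5) hr
  have r12 : r • x12 = x7 := by
    simpa only [mul_smul, one_smul, s7, r3, r6, r5, s1, r0, s0, r1, r2, s6, r9] using congrArg (· • x7) hu5
  have r13 : r • x13 = x9 := by
    simpa only [mul_smul, one_smul, s9, r6, r5, s1, r0, s0, r1, r2, s3, r7, r10] using congrArg (· • x9) hu1
  have s5 : s • x5 = x8 := by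
    simpa only [mul_smul, one_smul, s8] using congrArg (· • x8) hs
  have t3 : t • x3 = x6 := by
    simpa only [mul_smul, one_smul, r6, t5, r2] using congrArg (· • x6) hrt1
  have t8 : t • x8 = x4 := by
    simpa only [mul_smul, one_smul, s4, t2, s5] using congrArg (· • x4) hst1
  have t9 : t • x9 = x7 := by
    simpa only [mul_smul, one_smul, s7, t3, s6] using congrArg (· • x7) hst1
  have t4 : t • x4 = x8 := by
    simpa only [mul_smul, one_smul, s8, t5, s2] using congrArg (· • x8) hst1
  have r16 : r • x16 = x19 := by
    simpa only [mul_smul, one_smul, s19, r13, s9, r6, s5, r8, s11] using congrArg (· • x19) hrs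
  have r18 : r • x18 = x18 := by
    simpa only [mul_smul, one_smul, s18, r12, s7, r3, s6, r9, s12] using congrArg (· • x18) hrs
  have r22 : r • x22 = x14 := by
    simpa only [mul_smul, one_smul, s14, r10, r13, s9, r6, r5, r1, s2, r4, r8, s11, r16, r19] using congrArg (· • x14) hu1
  have r20 : r • x20 = x16 := by
    simpa only [mul_smul, one_smul, r16, s19, r13, r9, s12, r18, s18, r12, r7, s10, r14] using congrArg (· • x16) hu2
  have t6 : t • x6 = x3 := by
    simpa only [mul_smul, one_smul, t3] using congrArg (· • x3) ht
  have t7 : t • x7 = x9 := by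
    simpa only [mul_smul, one_smul, t9] using congrArg (· • x9) ht
  have r17 : r • x17 = x4 := by
    simpa only [mul_smul, one_smul, t4, r8, t11] using congrArg (· • x4) hrt
  have t12 : t • x12 = x12 := by
    simpa only [mul_smul, one_smul, r12, t7, r9] using congrArg (· • x12) hrt1
  have t10 : t • x10 = x13 := by
    simpa only [mul_smul, one_smul, r13, t9, r7] using congrArg (· • x13) hrt1
  have t19 : t • x19 = x14 := by
    simpa only [mul_smul, one_smul, s14, t10, s13] using congrArg (· • x14) hst1
  have t18 : t • x18 = x18 := by
    simpa only [mul_smul, one_smul, s18, t12, s12] using congrArg (· • x18) hst1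
  have s20 : s • x20 = x17 := by
    simpa only [mul_smul, one_smul, r17, s4, r2, s3, r7, s10, r14] using congrArg (· • x17) hrs1
  have r23 : r • x23 = x23 := by
    simpa only [mul_smul, one_smul, s23, r22, s14, r10, s13, r19, s22] using congrArg (· • x23) hrs
  have r15 : r • x15 = x17 := by
    simpa only [mul_smul, one_smul, r17, r4, r8, r11] using congrArg (· • x17) hr
  have s17 : s • x17 = x20 := by
    simpa only [mul_smul, one_smul, r20, r16, s19, r13, r9, r12, s7, r3, r6, s5, r8, r11, r15] using congrArg (· • x20) hu
  have t13 : t • x13 = x10 := by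
    simpa only [mul_smul, one_smul, t10] using congrArg (· • x10) ht
  have t14 : t • x14 = x19 := by
    simpa only [mul_smul, one_smul, t19] using congrArg (· • x19) ht
  have t22 : t • x22 = x22 := by
    simpa only [mul_smul, one_smul, r22, t14, r19] using congrArg (· • x22) hrt1
  have t15 : t • x15 = x15 := by
    simpa only [mul_smul, one_smul, r15, t17, r11] using congrArg (· • x15) hrt1
  have t20 : t • x20 = x16 := by
    simpa only [mul_smul, one_smul, r16, t19, r14] using congrArg (· • x16) hrt1
  have t21 : t • x21 = x21 := by
    simpa only [mul_smul, one_smul, s21, t15, s15] using congrArg (· • x21) hst1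
  have t16 : t • x16 = x20 := by
    simpa only [mul_smul, one_smul, s20, t17, s11] using congrArg (· • x20) hst1
  have t23 : t • x23 = x23 := by
    simpa only [mul_smul, one_smul, s23, t22, s22] using congrArg (· • x23) hst1
  have r21 : r • x21 = x21 := by
    simpa only [mul_smul, one_smul, s21, r15, s17, r20, s16, r11, s15] using congrArg (· • x21) hrs
  refine ⟨[x0, x1, x2, x3, x4, x5, x6, x7, x8, x9, x10, x11, x12, x13, x14, x15, x16, x17, x18, x19, x20, x21, x22, x23], rfl, by simp, ?_, ?_, ?_⟩
  · simp only [List.forall_mem_cons, r0, r1, r2, r3, r4, r5, r6, r7, r8, r9, r10, r11, r12, r13, r14, r15, r16, r17, r18, r19, r20, r21, r22, r23]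
    simp
  · simp only [List.forall_mem_cons, s0, s1, s2, s3, s4, s5, s6, s7, s8, s9, s10, s11, s12, s13, s14, s15, s16, s17, s18, s19, s20, s21, s22, s23]
    simp
  · simp only [List.forall_mem_cons, t0, t1, t2, t3, t4, t5, t6, t7, t8, t9, t10, t11, t12, t13, t14, t15, t16, t17, t18, t19, t20, t21, t22, t23]
    simp

theorem closed_list {G X : Type*} [Group G] [MulAction G X] (S : Set G) (l : List X)
    (h : ∀ g ∈ S, ∀ y ∈ l, g • y ∈ l) (g : G) (hg : g ∈ Subgroup.closure S) :
    ∀ y ∈ l, g • y ∈ l := by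
  classical
  induction hg using Subgroup.closure_induction with
  | mem x hx => exact h x hx
  | one => simp
  | mul x y _ _ hx hy =>
    intro z hz
    rw [mul_smul]
    exact hx _ (hy _ hz)
  | inv x _ hx =>
    intro z hz
    have hinj : Function.Injective (fun y : X => x • y) := MulAction.injective x
    have him : l.toFinset.image (fun y => x • y) = l.toFinset := by
      apply Finset.eq_of_subset_of_card_le
      · intro y hy
        simp only [Finset.mem_image, List.mem_toFinset] at hy ⊢
        obtain ⟨w, hw, rfl⟩ := hy
        exact hx w hw
      · rw [Finset.card_image_of_injective _ hinj]
    have : z ∈ l.toFinset.image (fun y => x • y) := by rw [him]; simpa using hz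
    simp only [Finset.mem_image, List.mem_toFinset] at this
    obtain ⟨w, hw, rfl⟩ := this
    simpa using hw

theorem card_le_of_list {X : Type*} (l : List X) (h : ∀ y, y ∈ l) :
    Finite X ∧ Nat.card X ≤ l.length := by
  have hs : Function.Surjective (fun i : Fin l.length => l.get i) := by
    intro y
    obtain ⟨i, hi⟩ := List.get_of_mem (h y)
    exact ⟨i, hi⟩
  refine ⟨Finite.of_surjective _ hs, ?_⟩
  simpa using Nat.card_le_card_of_surjective _ hs

theorem card_le {G : Type*} [Group G] (r s t : G)
    (hs : s * (s) = 1)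
    (ht : t * (t) = 1)
    (hrt : r * (t * (r * (t))) = 1)
    (hst : s * (t * (s * (t))) = 1)
    (hrs : r * (s * (r * (s * (r * (s * (r * (s))))))) = 1)
    (hr : r * (r * (r * (r * (r)))) = 1)
    (hu : s * (r * (r * (r * (s * (r * (r * (s * (r * (r * (r * (s * (r * (r))))))))))))) = 1)
    (htop : Subgroup.closure {r, s, t} = ⊤) : Finite G ∧ Nat.card G ≤ 240 := by
  have htr : t * r = r * (r * (r * (r * t))) := by
    have h1 : t * r = r⁻¹ * t⁻¹ := by
      rw [← mul_inv_rev]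
      apply eq_inv_of_mul_eq_one_right
      simpa only [mul_assoc] using mul_eq_one_comm.mp (by simpa only [mul_assoc] using hrt)
    have h2 : r⁻¹ = r * (r * (r * r)) := inv_eq_of_mul_eq_one_right hr
    have h3 : t⁻¹ = t := inv_eq_of_mul_eq_one_right ht
    rw [h1, h2, h3]
    simp only [mul_assoc]
  have htr2 : ∀ y, t * (r * y) = r * (r * (r * (r * (t * y)))) := by
    intro y
    rw [← mul_assoc, htr]
    simp only [mul_assoc]
  have hr2 : ∀ y, r * (r * (r * (r * (r * y)))) = y := by
    intro y
    simpa only [mul_assoc, one_mul] using congrArg (· * y) hr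
  let H : Subgroup G := Subgroup.closure {r, t}
  let L : List G := [1, r, r * r, r * (r * r), r * (r * (r * r)),
    t, r * t, r * (r * t), r * (r * (r * t)), r * (r * (r * (r * t)))]
  have hL : ∀ g ∈ H, g ∈ L := by
    intro g hg
    have := closed_list (X := G) {r, t} L (by
      intro g hg
      simp only [Set.mem_insert_iff, Set.mem_singleton_iff] at hg
      rcases hg with rfl | rfl
      · simp only [L, List.forall_mem_cons, smul_eq_mul, mul_one, hr, hr2]
        simp
      · simp only [L, List.forall_mem_cons, smul_eq_mul, mul_one, htr, htr2, hr, hr2, ht]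
        simp) g hg 1 (by simp [L])
    simpa using this
  have hH : Finite H ∧ Nat.card H ≤ 10 := by
    have hs : (H : Set G) ⊆ {g | g ∈ L} := hL
    have hf : Set.Finite {g | g ∈ L} := L.finite_toSet
    refine ⟨hf.subset hs, ?_⟩
    have h1 : Nat.card H ≤ Nat.card {g // g ∈ L} := by
      have : Finite {g // g ∈ L} := hf
      exact Nat.card_le_card_of_injective (fun g : H => (⟨g.1, hL _ g.2⟩ : {g // g ∈ L}))
        (fun a b hab => Subtype.ext (by simpa using hab))
    have h2 := (card_le_of_list L.attach (fun y => List.mem_attach _ y)).2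
    rw [List.length_attach] at h2
    exact h1.trans h2
  have hfix : ∀ g ∈ H, g • ((1 : G) : G ⧸ H) = ((1 : G) : G ⧸ H) := by
    intro g hg
    rw [MulAction.Quotient.smul_coe, smul_eq_mul, mul_one, QuotientGroup.eq]
    simpa using hg
  obtain ⟨l, hl, h0, h1, h2, h3⟩ := enum r s t hs ht hrt hst hrs hr hu ((1 : G) : G ⧸ H)
    (hfix r (Subgroup.subset_closure (by simp))) (hfix t (Subgroup.subset_closure (by simp)))
  have hQ := card_le_of_list l (by
    intro y
    induction y using QuotientGroup.induction_on with
    | H z =>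
      have := closed_list {r, s, t} l (by
        intro g hg
        simp only [Set.mem_insert_iff, Set.mem_singleton_iff] at hg
        rcases hg with rfl | rfl | rfl
        · exact h1
        · exact h2
        · exact h3) z (by rw [htop]; trivial) _ h0
      rwa [MulAction.Quotient.smul_coe, smul_eq_mul, mul_one] at this)
  obtain ⟨hQ1, hQ2⟩ := hQ
  obtain ⟨hH1, hH2⟩ := hH
  rw [hl] at hQ2
  refine ⟨Finite.of_equiv _ (Subgroup.groupEquivQuotientProdSubgroup (s := H)).symm, ?_⟩
  rw [Subgroup.card_eq_card_quotient_mul_card_subgroup H]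
  calc _ ≤ 24 * 10 := Nat.mul_le_mul hQ2 hH2
    _ = 240 := rfl

abbrev T := Equiv.Perm (Fin 5) × Multiplicative (ZMod 2)

def gens : Fin 3 → T :=
  ![(finRotate 5, 1), (Equiv.swap 3 4, 1),
    (Equiv.swap 0 2 * Equiv.swap 3 4, Multiplicative.ofAdd 1)]

theorem gens_rel : ∀ w ∈ bringRels, FreeGroup.lift gens w = 1 := by
  intro w hw
  simp only [bringRels, Set.mem_insert_iff, Set.mem_singleton_iff] at hw
  rcases hw with rfl | rfl | rfl | rfl | rfl | rfl | rfl <;>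
    simp only [r, s, t, map_mul, map_pow, FreeGroup.lift_apply_of] <;> decide

def phi : BringGroup →* T := PresentedGroup.toGroup gens_rel

theorem phi_of (i : Fin 3) : phi (PresentedGroup.of i) = gens i :=
  PresentedGroup.toGroup.of gens_rel

theorem phi_surj : Function.Surjective phi := by
  rw [← MonoidHom.range_eq_top]
  have hg : ∀ i, gens i ∈ phi.range := fun i => ⟨_, phi_of i⟩
  have h1 : phi.range.comap (MonoidHom.inl _ _) = ⊤ := by
    rw [eq_top_iff, ← Equiv.Perm.closure_cycle_adjacent_swap
      (isCycle_finRotate (n := 3)) (support_finRotate (n := 3)) 3, Subgroup.closure_le]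
    rintro x (rfl | rfl)
    · exact hg 0
    · exact hg 1
  have h2 : ∀ p, ((p, 1) : T) ∈ phi.range := by
    intro p
    have : p ∈ phi.range.comap (MonoidHom.inl _ _) := by rw [h1]; trivial
    exact this
  have h3 : ∀ z, ((1, z) : T) ∈ phi.range := by
    have h4 : ((1, Multiplicative.ofAdd 1) : T) ∈ phi.range := by
      have := mul_mem (hg 2) (h2 (Equiv.swap 0 2 * Equiv.swap 3 4)⁻¹)
      have h5 : ∀ (a : Equiv.Perm (Fin 5)) (z : Multiplicative (ZMod 2)),
          ((a, z) : T) * (a⁻¹, 1) = (1, z) := by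
        intro a z
        simp only [Prod.mk_mul_mk, mul_inv_cancel, mul_one]
      rw [← h5 (Equiv.swap 0 2 * Equiv.swap 3 4)]
      exact this
    intro z
    have : z = 1 ∨ z = Multiplicative.ofAdd 1 := by revert z; decide
    rcases this with rfl | rfl
    · exact one_mem _
    · exact h4
  rw [eq_top_iff]
  rintro ⟨p, z⟩ -
  simpa using mul_mem (h2 p) (h3 z)

theorem rel_one {w : FreeGroup (Fin 3)} (hw : w ∈ bringRels) :
    PresentedGroup.mk bringRels w = 1 :=
  PresentedGroup.one_of_mem hw

theorem card_T : Nat.card T = 240 := by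
  rw [Nat.card_prod, Nat.card_perm]
  simp [Nat.factorial]

theorem bring_card_le_aux {G : Type*} [Group G] (f : FreeGroup (Fin 3) →* G)
    (key : ∀ w ∈ bringRels, f w = 1) (htop : Subgroup.closure {f r, f s, f t} = ⊤) :
    Finite G ∧ Nat.card G ≤ 240 := by
  simp only [bringRels, Set.forall_mem_insert, Set.mem_singleton_iff, forall_eq] at key
  simp only [map_mul, map_pow, pow_succ, pow_zero, one_mul, mul_assoc] at key
  obtain ⟨hr, hs, ht, hrt, hst, hrs, hu⟩ := key
  exact card_le _ _ _ hs ht hrt hst hrs hr hu htop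

theorem bring_card_le : Finite BringGroup ∧ Nat.card BringGroup ≤ 240 := by
  refine bring_card_le_aux (PresentedGroup.mk bringRels) (fun w hw => rel_one hw) ?_
  rw [eq_top_iff, ← PresentedGroup.closure_range_of bringRels]
  apply Subgroup.closure_mono
  rintro _ ⟨i, rfl⟩
  fin_cases i
  · exact Or.inl rfl
  · exact Or.inr (Or.inl rfl)
  · exact Or.inr (Or.inr rfl)

/-- The full symmetry group of Bring's surface is isomorphic to `S₅ × ℤ/2ℤ`;
in particular it has order 240. -/
theorem bringGroup_iso :
    Nonempty (BringGroup ≃* Equiv.Perm (Fin 5) × Multiplicative (ZMod 2)) ∧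
    Nat.card BringGroup = 240 := by
  obtain ⟨hf, hc⟩ := bring_card_le
  have hcard : Nat.card BringGroup = 240 :=
    le_antisymm hc (by rw [← card_T]; exact Nat.card_le_card_of_surjective _ phi_surj)
  have hb : Function.Bijective phi :=
    (Nat.bijective_iff_surjective_and_card phi).mpr ⟨phi_surj, by rw [hcard, card_T]⟩
  exact ⟨⟨MulEquiv.ofBijective phi hb⟩, hcard⟩

end BringStmt9
end

section
/- Let q = √(3 + 2√2 − 2√(4 + 3√2)) and a = 2^(1/4) − 1. For x ∈ [0, a] set c₁(x) = √(q² − x²) and c₂(x) = √((1/sin(π/8))² − (x + cos(π/8)/sin(π/8))²), and define φ₁(x, y) = (y − √(1 − 22·x²) − 1)·(y − √(q² − x²)). Then ∫₀ᵃ (∫_{c₁(x)}^{c₂(x)} φ₁(x, y)² / y² dy) dx > 28089/1000000. -/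
open intervalIntegral

namespace Bolza

def ad : List ℤ → List ℤ → List ℤ
  | [], q => q
  | a :: p, [] => a :: p
  | a :: p, b :: q => (a + b) :: ad p q

def sm (k : ℤ) : List ℤ → List ℤ
  | [] => []
  | a :: p => (k * a) :: sm k p

def mu : List ℤ → List ℤ → List ℤ
  | [], _ => []
  | a :: p, q => ad (sm a q) (0 :: mu p q)

def ad2 : List (List ℤ) → List (List ℤ) → List (List ℤ)
  | [], q => q
  | a :: p, [] => a :: p
  | a :: p, b :: q => ad a b :: ad2 p q

def sm2 (k : ℤ) : List (List ℤ) → List (List ℤ)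
  | [] => []
  | a :: p => sm k a :: sm2 k p

def mu2 : List ℤ → List (List ℤ) → List (List ℤ)
  | [], _ => []
  | a :: p, q => ad2 (sm2 a q) ([] :: mu2 p q)

def ig2 : ℕ → List (List ℤ) → List (List ℤ)
  | _, [] => []
  | n, a :: l => sm ((12252240 / (n + 1) : ℕ) : ℤ) a :: ig2 (n + 1) l

def hs (x y : ℤ) : ℤ → List ℤ → List ℤ → List ℤ
  | t, [], [] => [y * t]
  | t, a :: as, [] => (a + y * t) :: as
  | t, [], o :: os => (x * o + y * t) :: hs x y o [] os
  | t, a :: as, o :: os => (a + (x * o + y * t)) :: hs x y o as os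

def co2 (x y : ℤ) : List (List ℤ) → List ℤ
  | [] => []
  | a :: l => hs x y 0 a (co2 x y l)

def ig : ℕ → List ℤ → List ℤ
  | _, [] => []
  | n, a :: l => (a * ((12252240 / (n + 1) : ℕ) : ℤ)) :: ig (n + 1) l

def su : List ℤ → ℤ
  | [] => 0
  | a :: l => a + su l

def ph : List ℤ :=
  [2416280 * 10 ^ 99, -3054984440 * 10 ^ 90, 1948798286882 * 10 ^ 81, -785238094982600 * 10 ^ 72, 216926562408256820 * 10 ^ 63, -42613556209155131960 * 10 ^ 54, 6030575019234483088919 * 10 ^ 45, -612056959057591310803800 * 10 ^ 36, 43530364586238751911578300 * 10 ^ 27, -2062074203624532828309390000 * 10 ^ 18, 58475267856042977349413640000 * 10 ^ 9, -751285403497217284215156000000 * 10 ^ 0]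

/-- Coefficients (in `y`) of `(y-s)^2 (y-c)^2`, with `b = s + c`, `w = s c`. -/
def quart (b w : List ℤ) : List (List ℤ) :=
  [mu w w, sm (-2) (mu b w), ad (mu b b) (sm 2 w), sm (-2) b, [1]]

def prim (s c : List ℤ) : List (List ℤ) :=
  ig2 0 (mu2 ph (quart (ad s c) (mu s c)))

def KL (P : List (List ℤ)) (c d e f : ℤ) : List ℤ :=
  ad (co2 e f ([] :: P)) (sm (-1) (co2 c d ([] :: P)))

def stripL (n m : ℤ × ℤ × ℤ) : List ℤ :=
  KL (prim [n.1, m.1 - n.1] [n.2.1, m.2.1 - n.2.1]) n.2.1 (m.2.1 - n.2.1) n.2.2 (m.2.2 - n.2.2)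

def nodeOK (i : ℤ) (n : ℤ × ℤ × ℤ) : Bool :=
  decide ((n.1 - 10 ^ 7) ^ 2 + 22 * (188 * i) ^ 2 * 10 ^ 4 ≤ 10 ^ 14) &&
  decide (10 ^ 7 ≤ n.1) && decide (0 < n.2.1) && decide (n.2.1 ≤ n.2.2) &&
  decide (n.2.2 ≤ 10 ^ 7) &&
  decide (n.2.2 ^ 2 + 48284272 * 188 * i * 100 + (188 * i) ^ 2 * 10 ^ 4 ≤ 10 ^ 14)

def stripOK (i : ℤ) (n m : ℤ × ℤ × ℤ) : Bool :=
  nodeOK i n && nodeOK (i + 1) m &&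
  decide (8642724 * (18800 ^ 2 + (m.2.1 - n.2.1) ^ 2) * 10 ^ 14 ≤
    10 ^ 8 * (18800 * i * m.2.1 - 18800 * (i + 1) * n.2.1) ^ 2)

def allOK : ℤ → List (ℤ × ℤ × ℤ) → Bool
  | _, [] => true
  | _, [_] => true
  | i, n :: m :: l => stripOK i n m && allOK (i + 1) (m :: l)

def total : List (ℤ × ℤ × ℤ) → ℤ
  | [] => 0
  | [_] => 0
  | n :: m :: l => su (ig 0 (stripL n m)) + total (m :: l)

theorem len_ad : ∀ p q : List ℤ, (ad p q).length = max p.length q.length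
  | [], q => by simp [ad]
  | a :: p, [] => by simp [ad]
  | a :: p, b :: q => by simp [ad, len_ad p q]

theorem len_sm (k : ℤ) : ∀ p : List ℤ, (sm k p).length = p.length
  | [] => rfl
  | a :: p => by simp [sm, len_sm k p]

theorem len_mu2 (a b : ℤ) (q : List ℤ) :
    (mu [a, b] q).length = max q.length (max q.length 1 + 1) := by
  simp [mu, len_ad, len_sm]

def data : List (ℤ × ℤ × ℤ) :=
  [(20000000, 2939868, 10000000), (19999611, 2939808, 9954491), (19998444, 2939628, 9908738),
   (19996500, 2939327, 9862737), (19993777, 2938906, 9816484), (19990275, 2938365, 9769976),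
   (19985993, 2937703, 9723209), (19980931, 2936921, 9676180), (19975086, 2936019, 9628884),
   (19968458, 2934995, 9581318), (19961045, 2933851, 9533478), (19952845, 2932586, 9485359),
   (19943857, 2931199, 9436957), (19934078, 2929692, 9388268), (19923505, 2928063, 9339288),
   (19912137, 2926312, 9290011), (19899971, 2924439, 9240433), (19887003, 2922444, 9190549),
   (19873230, 2920327, 9140354), (19858649, 2918087, 9089844), (19843257, 2915725, 9039011),
   (19827050, 2913239, 8987853), (19810023, 2910629, 8936361), (19792173, 2907896, 8884532),
   (19773495, 2905038, 8832358), (19753983, 2902056, 8779834), (19733634, 2898948, 8726953),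
   (19712441, 2895716, 8673710), (19690400, 2892357, 8620096), (19667505, 2888873, 8566105),
   (19643748, 2885261, 8511731), (19619125, 2881523, 8456965), (19593628, 2877656, 8401800),
   (19567250, 2873662, 8346229), (19539985, 2869539, 8290242), (19511823, 2865286, 8233831),
   (19482759, 2860904, 8176988), (19452782, 2856391, 8119704), (19421885, 2851747, 8061969),
   (19390058, 2846972, 8003773), (19357291, 2842064, 7945106), (19323576, 2837023, 7885959),
   (19288902, 2831848, 7826319), (19253257, 2826539, 7766175), (19216630, 2821094, 7705516),
   (19179011, 2815514, 7644330), (19140386, 2809796, 7582603), (19100742, 2803941, 7520323),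
   (19060068, 2797947, 7457475), (19018347, 2791814, 7394046), (18975566, 2785540, 7330019),
   (18931710, 2779125, 7265379), (18886763, 2772568, 7200110), (18840707, 2765868, 7134195),
   (18793527, 2759023, 7067614), (18745202, 2752032, 7000350), (18695715, 2744895, 6932382),
   (18645045, 2737611, 6863690), (18593172, 2730177, 6794251), (18540073, 2722594, 6724043),
   (18485726, 2714859, 6653041), (18430106, 2706971, 6581219), (18373188, 2698929, 6508550),
   (18314945, 2690732, 6435006), (18255350, 2682378, 6360556), (18194373, 2673866, 6285167),
   (18131982, 2665194, 6208807), (18068145, 2656361, 6131438), (18002827, 2647365, 6053022),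
   (17935993, 2638204, 5973517), (17867602, 2628877, 5892880), (17797614, 2619381, 5811063),
   (17725986, 2609716, 5728016), (17652672, 2599879, 5643685), (17577623, 2589868, 5558010),
   (17500786, 2579681, 5470930), (17422107, 2569316, 5382375), (17341525, 2558771, 5292271),
   (17258978, 2548044, 5200539), (17174397, 2537132, 5107091), (17087711, 2526033, 5011829),
   (16998840, 2514744, 4914650), (16907700, 2503264, 4815437), (16814201, 2491588, 4714061),
   (16718243, 2479716, 4610380), (16619721, 2467643, 4504234), (16518517, 2455366, 4395446),
   (16414505, 2442883, 4283813), (16307545, 2430191, 4169107), (16197486, 2417286, 4051068),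
   (16084159, 2404164, 3929395), (15967377, 2390823, 3803739), (15846934, 2377258, 3673691),
   (15722599, 2363466, 3538767), (15594112, 2349443, 3398387), (15461180, 2335184, 3251844),
   (15323470, 2320685, 3098264), (15180601, 2305941, 2936542), (15032133, 2290949, 2765252),
   (14877556, 2275702, 2582488), (14716269, 2260197, 2385617)]

/-! ### Semantics of the list computations -/

noncomputable def ev : List ℤ → ℝ → ℝ
  | [], _ => 0
  | a :: l, x => (a : ℝ) + x * ev l x

noncomputable def ev2 : List (List ℤ) → ℝ → ℝ → ℝ
  | [], _, _ => 0
  | a :: l, t, y => ev a t + y * ev2 l t y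

theorem ev_ad (x : ℝ) : ∀ p q : List ℤ, ev (ad p q) x = ev p x + ev q x
  | [], q => by simp [ad, ev]
  | a :: p, [] => by simp [ad, ev]
  | a :: p, b :: q => by simp only [ad, ev, ev_ad x p q]; push_cast; ring

theorem ev_sm (x : ℝ) (k : ℤ) : ∀ p : List ℤ, ev (sm k p) x = k * ev p x
  | [] => by simp [sm, ev]
  | a :: p => by simp only [sm, ev, ev_sm x k p]; push_cast; ring

theorem ev_mu (x : ℝ) (q : List ℤ) : ∀ p : List ℤ, ev (mu p q) x = ev p x * ev q x
  | [] => by simp [mu, ev]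
  | a :: p => by simp only [mu, ev, ev_ad, ev_sm, ev_mu x q p]; push_cast; ring

theorem ev2_ad2 (t y : ℝ) : ∀ p q : List (List ℤ), ev2 (ad2 p q) t y = ev2 p t y + ev2 q t y
  | [], q => by simp [ad2, ev2]
  | a :: p, [] => by simp [ad2, ev2]
  | a :: p, b :: q => by simp only [ad2, ev2, ev_ad, ev2_ad2 t y p q]; ring

theorem ev2_sm2 (t y : ℝ) (k : ℤ) : ∀ p : List (List ℤ), ev2 (sm2 k p) t y = k * ev2 p t y
  | [] => by simp [sm2, ev2]
  | a :: p => by simp only [sm2, ev2, ev_sm, ev2_sm2 t y k p]; ring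

theorem ev2_mu2 (t y : ℝ) (q : List (List ℤ)) :
    ∀ p : List ℤ, ev2 (mu2 p q) t y = ev p y * ev2 q t y
  | [] => by simp [mu2, ev, ev2]
  | a :: p => by simp only [mu2, ev, ev2, ev2_ad2, ev2_sm2, ev2_mu2 t y q p]; ring

theorem ev_hs (u v : ℤ) (τ : ℝ) : ∀ (t : ℤ) (a o : List ℤ),
    ev (hs u v t a o) τ = ev a τ + (u + v * τ) * ev o τ + v * t
  | t, [], [] => by simp [hs, ev]
  | t, a :: as, [] => by simp only [hs, ev]; push_cast; ring
  | t, [], o :: os => by simp only [hs, ev, ev_hs u v τ o [] os]; push_cast; ring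
  | t, a :: as, o :: os => by simp only [hs, ev, ev_hs u v τ o as os]; push_cast; ring

theorem ev_co2 (u v : ℤ) (τ : ℝ) : ∀ P : List (List ℤ),
    ev (co2 u v P) τ = ev2 P τ (u + v * τ)
  | [] => by simp [co2, ev, ev2]
  | a :: l => by simp only [co2, ev_hs, ev2, ev_co2 u v τ l]; push_cast; ring

theorem ev_one : ∀ l : List ℤ, ev l 1 = su l
  | [] => by simp [ev, su]
  | a :: l => by simp only [ev, su, ev_one l]; push_cast; ring

theorem quot_mul (n : ℕ) (hn : n + 1 ≤ 18) :
    (((12252240 / (n + 1) : ℕ) : ℤ) : ℝ) * ((n : ℝ) + 1) = 12252240 := by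
  have h : (12252240 / (n + 1)) * (n + 1) = 12252240 := by
    apply Nat.div_mul_cancel
    have h' : n ≤ 17 := by omega
    interval_cases n <;> norm_num
  exact_mod_cast h

theorem cont_ev : ∀ l : List ℤ, Continuous (ev l)
  | [] => continuous_const
  | _ :: l => continuous_const.add (continuous_id.mul (cont_ev l))

theorem cont_ev2 (t : ℝ) : ∀ l : List (List ℤ), Continuous (ev2 l t)
  | [] => continuous_const
  | _ :: l => continuous_const.add (continuous_id.mul (cont_ev2 t l))

theorem deriv_ig (y : ℝ) : ∀ (l : List ℤ) (n : ℕ), n + l.length ≤ 18 →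
    HasDerivAt (fun y => y ^ (n + 1) * ev (ig n l) y) (12252240 * (y ^ n * ev l y)) y
  | [], n, _ => by simpa [ig, ev] using hasDerivAt_const y (0 : ℝ)
  | a :: l, n, h => by
    have ih := deriv_ig y l (n + 1) (by simp at h; omega)
    have h1 := ((hasDerivAt_pow (n + 1) y).const_mul
      ((a : ℝ) * (((12252240 / (n + 1) : ℕ) : ℤ) : ℝ))).add ih
    have hq := quot_mul n (by simp at h; omega)
    have hf : (fun y => y ^ (n + 1) * ev (ig n (a :: l)) y) =
        (fun y => (a : ℝ) * (((12252240 / (n + 1) : ℕ) : ℤ) : ℝ) * y ^ (n + 1)) +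
          fun y => y ^ (n + 1 + 1) * ev (ig (n + 1) l) y := by
      funext z
      simp only [ig, ev, Pi.add_apply, Int.cast_mul]; ring
    rw [hf]
    refine h1.congr_deriv ?_
    simp only [ev, Nat.add_sub_cancel, Nat.cast_add, Nat.cast_one]
    linear_combination ((a : ℝ) * y ^ n) * hq

theorem deriv_ig2 (t y : ℝ) : ∀ (l : List (List ℤ)) (n : ℕ), n + l.length ≤ 18 →
    HasDerivAt (fun y => y ^ (n + 1) * ev2 (ig2 n l) t y) (12252240 * (y ^ n * ev2 l t y)) y
  | [], n, _ => by simpa [ig2, ev2] using hasDerivAt_const y (0 : ℝ)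
  | a :: l, n, h => by
    have ih := deriv_ig2 t y l (n + 1) (by simp at h; omega)
    have h1 := ((hasDerivAt_pow (n + 1) y).const_mul
      (ev a t * (((12252240 / (n + 1) : ℕ) : ℤ) : ℝ))).add ih
    have hq := quot_mul n (by simp at h; omega)
    have hf : (fun y => y ^ (n + 1) * ev2 (ig2 n (a :: l)) t y) =
        (fun y => ev a t * (((12252240 / (n + 1) : ℕ) : ℤ) : ℝ) * y ^ (n + 1)) +
          fun y => y ^ (n + 1 + 1) * ev2 (ig2 (n + 1) l) t y := by
      funext z
      simp only [ig2, ev2, ev_sm, Pi.add_apply]; ring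
    rw [hf]
    refine h1.congr_deriv ?_
    simp only [ev2, Nat.add_sub_cancel, Nat.cast_add, Nat.cast_one]
    linear_combination (ev a t * y ^ n) * hq

theorem int_ev (l : List ℤ) (h : l.length ≤ 18) :
    ∫ t in (0 : ℝ)..1, ev l t = su (ig 0 l) / 12252240 := by
  have h1 := intervalIntegral.integral_eq_sub_of_hasDerivAt (a := 0) (b := 1)
    (fun y _ => deriv_ig y l 0 (by omega))
    ((continuous_const.mul ((continuous_id.pow 0).mul (cont_ev l))).intervalIntegrable _ _)
  simp only [intervalIntegral.integral_const_mul, pow_zero, one_mul, ev_one] at h1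
  rw [eq_div_iff (by norm_num)]
  norm_num at h1
  linarith [h1]

theorem quart_len (b w : List ℤ) : (mu2 ph (quart b w)).length = 16 := by
  simp [ph, mu2, quart, ad2, sm2]

theorem ev2_quart (s c : List ℤ) (t y : ℝ) :
    ev2 (quart (ad s c) (mu s c)) t y = ((y - ev s t) * (y - ev c t)) ^ 2 := by
  simp only [quart, ev2, ev_ad, ev_mu, ev_sm, ev]; push_cast; ring

theorem int_prim (s c : List ℤ) (t u v : ℝ) :
    v * ev2 (prim s c) t v - u * ev2 (prim s c) t u =
      12252240 * ∫ y in u..v, ev ph y * ((y - ev s t) * (y - ev c t)) ^ 2 := by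
  have h1 := intervalIntegral.integral_eq_sub_of_hasDerivAt (a := u) (b := v)
    (fun y _ => deriv_ig2 t y (mu2 ph (quart (ad s c) (mu s c))) 0 (by rw [quart_len]; omega))
    ((continuous_const.mul ((continuous_id.pow 0).mul (cont_ev2 t _))).intervalIntegrable _ _)
  simp only [intervalIntegral.integral_const_mul, pow_zero, one_mul, zero_add, pow_one,
    ev2_mu2, ev2_quart] at h1
  rw [h1]; rfl

theorem ev_stripL (n m : ℤ × ℤ × ℤ) (t : ℝ) :
    ev (stripL n m) t = 12252240 *
      ∫ y in ((n.2.1 : ℝ) + (m.2.1 - n.2.1) * t)..((n.2.2 : ℝ) + (m.2.2 - n.2.2) * t),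
        ev ph y * ((y - ((n.1 : ℝ) + (m.1 - n.1) * t)) *
          (y - ((n.2.1 : ℝ) + (m.2.1 - n.2.1) * t))) ^ 2 := by
  have h := int_prim [n.1, m.1 - n.1] [n.2.1, m.2.1 - n.2.1] t
    ((n.2.1 : ℝ) + (m.2.1 - n.2.1) * t) ((n.2.2 : ℝ) + (m.2.2 - n.2.2) * t)
  have e1 : ∀ a b : ℤ, ev [a, b - a] t = (a : ℝ) + (b - a) * t := by
    intro a b; simp only [ev]; push_cast; ring
  rw [e1, e1] at h
  rw [← h]
  simp only [stripL, KL, ev_ad, ev_sm, ev_co2, ev2, ev]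
  push_cast; ring

theorem stripL_length (n m : ℤ × ℤ × ℤ) : (stripL n m).length = 17 := by
  simp [stripL, KL, prim, quart, ph, mu2, ig2, sm2, ad2, co2, hs, sm, mu, ad]

theorem ph_le (y : ℝ) (hy : 0 < y) : ev ph y * y ^ 2 ≤ 10 ^ 117 := by
  have h : (10 : ℝ) ^ 117 - ev ph y * y ^ 2 = (10 ^ 9 + 2100 * y) *
      ((10 ^ 9 - 299 * y) * (10 ^ 9 - 223 * y) * (10 ^ 9 - 170 * y) * (10 ^ 9 - 137 * y) *
        (10 ^ 9 - 116 * y) * (10 ^ 9 - 105 * y)) ^ 2 := by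
    simp only [ph, ev]; push_cast; ring
  have h2 : 0 ≤ (10 : ℝ) ^ 117 - ev ph y * y ^ 2 := by rw [h]; positivity
  linarith

/-! ### Analysis -/

noncomputable def Gf (Q m x : ℝ) : ℝ :=
  ∫ y in (√(Q - x ^ 2))..(√(1 - m * x - x ^ 2)),
    ((y - √(1 - 22 * x ^ 2) - 1) * (y - √(Q - x ^ 2))) ^ 2 / y ^ 2

theorem f_cont (s c u v : ℝ) (hu : 0 < u) (huv : u ≤ v) :
    ContinuousOn (fun y : ℝ => ((y - s - 1) * (y - c)) ^ 2 / y ^ 2) (Set.uIcc u v) := by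
  rw [Set.uIcc_of_le huv]
  apply ContinuousOn.div (by fun_prop) (by fun_prop)
  intro y hy
  have : 0 < y := lt_of_lt_of_le hu hy.1
  positivity

theorem Gf_lower {Q m x S C E : ℝ} (hQ : 0 < Q - x ^ 2)
    (hC : Q - x ^ 2 ≤ (C / 10 ^ 7) ^ 2) (hC0 : 0 < C) (hCE : C ≤ E) (hE : E ≤ 10 ^ 7)
    (hS : 10 ^ 7 ≤ S) (hE2 : (E / 10 ^ 7) ^ 2 ≤ 1 - m * x - x ^ 2)
    (hS2 : (S / 10 ^ 7 - 1) ^ 2 ≤ 1 - 22 * x ^ 2) :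
    (∫ y in C..E, ev ph y * ((y - S) * (y - C)) ^ 2) / 10 ^ 138 ≤ Gf Q m x := by
  set s := √(1 - 22 * x ^ 2) with hs
  set c := √(Q - x ^ 2) with hc
  set e := √(1 - m * x - x ^ 2) with he
  have c0 : 0 < c := Real.sqrt_pos.mpr hQ
  have cC : c ≤ C / 10 ^ 7 := Real.sqrt_le_iff.mpr ⟨by positivity, hC⟩
  have eE : E / 10 ^ 7 ≤ e := Real.le_sqrt_of_sq_le hE2
  have sS : S / 10 ^ 7 - 1 ≤ s := Real.le_sqrt_of_sq_le hS2
  have CE : C / 10 ^ 7 ≤ E / 10 ^ 7 := by gcongr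
  have C0 : 0 < C / 10 ^ 7 := by positivity
  have step1 : ∫ y in (C / 10 ^ 7)..(E / 10 ^ 7), ((y - s - 1) * (y - c)) ^ 2 / y ^ 2 ≤
      Gf Q m x := by
    unfold Gf
    rw [← hs, ← hc, ← he]
    apply intervalIntegral.integral_mono_interval cC CE eE
    · exact Filter.Eventually.of_forall fun y => by positivity
    · exact (f_cont s c c e c0 (by linarith)).intervalIntegrable
  have step2 : ∫ y in (C / 10 ^ 7)..(E / 10 ^ 7),
      (fun z => ev ph z * ((z - S) * (z - C)) ^ 2 / 10 ^ 131) (10 ^ 7 * y) ≤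
      ∫ y in (C / 10 ^ 7)..(E / 10 ^ 7), ((y - s - 1) * (y - c)) ^ 2 / y ^ 2 := by
    apply intervalIntegral.integral_mono_on CE
    · apply Continuous.intervalIntegrable
      have := cont_ev ph
      fun_prop
    · exact (f_cont s c _ _ C0 CE).intervalIntegrable
    · intro y hy
      have y0 : 0 < y := lt_of_lt_of_le C0 hy.1
      have hp := ph_le (10 ^ 7 * y) (by positivity)
      have hyC : C ≤ 10 ^ 7 * y := by
        have := hy.1
        rw [div_le_iff₀ (by positivity)] at this; linarith
      have hyE : 10 ^ 7 * y ≤ E := by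
        have := hy.2
        rw [le_div_iff₀ (by positivity)] at this; linarith
      rw [le_div_iff₀ (by positivity)]
      have h1 : ((10 ^ 7 * y - S) * (10 ^ 7 * y - C)) ^ 2 ≤
          10 ^ 28 * ((y - s - 1) * (y - c)) ^ 2 := by
        have a1 : 0 ≤ S - 10 ^ 7 * y := by linarith
        have a2 : S - 10 ^ 7 * y ≤ 10 ^ 7 * (s + 1 - y) := by
          have : S / 10 ^ 7 * 10 ^ 7 = S := by field_simp
          nlinarith
        have b1 : 0 ≤ 10 ^ 7 * y - C := by linarith
        have b2 : 10 ^ 7 * y - C ≤ 10 ^ 7 * (y - c) := by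
          have : C / 10 ^ 7 * 10 ^ 7 = C := by field_simp
          nlinarith
        have h := mul_le_mul a2 b2 b1 (a1.trans a2)
        have h' := pow_le_pow_left₀ (mul_nonneg a1 b1) h 2
        calc _ = ((S - 10 ^ 7 * y) * (10 ^ 7 * y - C)) ^ 2 := by ring
          _ ≤ _ := h'
          _ = _ := by ring
      have h2 := mul_le_mul_of_nonneg_right hp
        (sq_nonneg ((10 ^ 7 * y - S) * (10 ^ 7 * y - C)))
      have h3 : ev ph (10 ^ 7 * y) * ((10 ^ 7 * y - S) * (10 ^ 7 * y - C)) ^ 2 / 10 ^ 131 * y ^ 2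
          = (ev ph (10 ^ 7 * y) * (10 ^ 7 * y) ^ 2 *
            ((10 ^ 7 * y - S) * (10 ^ 7 * y - C)) ^ 2) / 10 ^ 145 := by
        ring
      show ev ph (10 ^ 7 * y) * ((10 ^ 7 * y - S) * (10 ^ 7 * y - C)) ^ 2 / 10 ^ 131 * y ^ 2 ≤ _
      rw [h3, div_le_iff₀ (by positivity)]
      calc _ ≤ _ := h2
        _ ≤ 10 ^ 117 * (10 ^ 28 * ((y - s - 1) * (y - c)) ^ 2) := by gcongr
        _ = _ := by ring
  generalize hg : (fun z => ev ph z * ((z - S) * (z - C)) ^ 2 / 10 ^ 131) = g at step2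
  rw [intervalIntegral.integral_comp_mul_left g (by norm_num), ← hg,
    intervalIntegral.integral_div] at step2
  rw [mul_div_cancel₀ _ (by norm_num), mul_div_cancel₀ _ (by norm_num), smul_eq_mul] at step2
  refine le_trans (le_of_eq ?_) (step2.trans step1)
  ring

theorem strip_pt {Q m : ℝ} (hQ0 : 864 / 10000 ≤ Q) (hQ : Q ≤ 8642724 / 10 ^ 8)
    (hm : m ≤ 48284272 / 10 ^ 7) (i : ℤ) (hi0 : 0 ≤ i) (hi : i + 1 ≤ 100)
    (n k : ℤ × ℤ × ℤ) (hok : stripOK i n k = true) (t : ℝ) (ht0 : 0 ≤ t) (ht1 : t ≤ 1) :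
    ev (stripL n k) t / (12252240 * 10 ^ 138) ≤ Gf Q m (188 / 10 ^ 5 * (i + t)) := by
  obtain ⟨S0, C0, E0⟩ := n
  obtain ⟨S1, C1, E1⟩ := k
  simp only [stripOK, nodeOK, Bool.and_eq_true, decide_eq_true_eq] at hok
  obtain ⟨⟨⟨⟨⟨⟨⟨a1, a2⟩, a3⟩, a4⟩, a5⟩, a6⟩, ⟨⟨⟨⟨b1, b2⟩, b3⟩, b4⟩, b5⟩, b6⟩, d1⟩ := hok
  rw [ev_stripL]
  simp only
  have hir : (0 : ℝ) ≤ i := by exact_mod_cast hi0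
  have hir' : (i : ℝ) + 1 ≤ 100 := by exact_mod_cast hi
  rify at a1 a2 a3 a4 a5 a6 b1 b2 b3 b4 b5 b6 d1
  generalize (S0 : ℝ) = S0 at *
  generalize (S1 : ℝ) = S1 at *
  generalize (C0 : ℝ) = C0 at *
  generalize (C1 : ℝ) = C1 at *
  generalize (E0 : ℝ) = E0 at *
  generalize (E1 : ℝ) = E1 at *
  generalize (i : ℝ) = i at *
  have ht' : 0 ≤ 1 - t := by linarith
  have htt : 0 ≤ t * (1 - t) := mul_nonneg ht0 ht'
  rw [mul_comm (12252240 : ℝ) (10 ^ 138), mul_comm (12252240 : ℝ), mul_div_mul_right _ _ (by norm_num)]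
  have hx0 : 0 ≤ 188 / 10 ^ 5 * (i + t) := by positivity
  have hx1 : 188 / 10 ^ 5 * (i + t) ≤ 188 / 1000 := by linarith
  apply Gf_lower
  · nlinarith
  · -- Cauchy-Schwarz
    set P := C0 + (C1 - C0) * t with hP
    have hd : 0 < 18800 ^ 2 + (C1 - C0) ^ 2 := by positivity
    have key : (18800 * i * C1 - 18800 * (i + 1) * C0) ^ 2 ≤
        ((18800 * (i + t)) ^ 2 + P ^ 2) * (18800 ^ 2 + (C1 - C0) ^ 2) := by
      have : ((18800 * (i + t)) ^ 2 + P ^ 2) * (18800 ^ 2 + (C1 - C0) ^ 2) =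
        (18800 * i * C1 - 18800 * (i + 1) * C0) ^ 2 +
          (18800 * (i + t) * 18800 + P * (C1 - C0)) ^ 2 := by rw [hP]; ring
      rw [this]; linarith [sq_nonneg (18800 * (i + t) * 18800 + P * (C1 - C0))]
    have h3 : 8642724 * 10 ^ 14 * (18800 ^ 2 + (C1 - C0) ^ 2) ≤
        10 ^ 8 * ((18800 * (i + t)) ^ 2 + P ^ 2) * (18800 ^ 2 + (C1 - C0) ^ 2) := by
      linarith [key]
    have h4 := le_of_mul_le_mul_right h3 hd
    have : (P / 10 ^ 7) ^ 2 = P ^ 2 / 10 ^ 14 := by ring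
    rw [this, le_div_iff₀ (by positivity)]
    linarith
  · rcases eq_or_lt_of_le ht0 with h | h
    · rw [← h]; linarith
    · linarith [mul_nonneg ht' a3.le, mul_pos h b3]
  · linarith [mul_nonneg ht' (sub_nonneg.2 a4), mul_nonneg ht0 (sub_nonneg.2 b4)]
  · linarith [mul_nonneg ht' (sub_nonneg.2 a5), mul_nonneg ht0 (sub_nonneg.2 b5)]
  · linarith [mul_nonneg ht' (sub_nonneg.2 a2), mul_nonneg ht0 (sub_nonneg.2 b2)]
  · have h1 : (E0 + (E1 - E0) * t) ^ 2 ≤ (1 - t) * E0 ^ 2 + t * E1 ^ 2 := by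
      linarith [mul_nonneg htt (sq_nonneg (E1 - E0))]
    have h2 : (i + t) ^ 2 ≤ (1 - t) * i ^ 2 + t * (i + 1) ^ 2 := by linarith
    have h3 := mul_le_mul_of_nonneg_left a6 ht'
    have h4 := mul_le_mul_of_nonneg_left b6 ht0
    have h5 := mul_le_mul_of_nonneg_right hm hx0
    have : ((E0 + (E1 - E0) * t) / 10 ^ 7) ^ 2 = (E0 + (E1 - E0) * t) ^ 2 / 10 ^ 14 := by ring
    rw [this, div_le_iff₀ (by positivity)]
    linarith
  · have h1 : (S0 - 10 ^ 7 + (S1 - S0) * t) ^ 2 ≤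
        (1 - t) * (S0 - 10 ^ 7) ^ 2 + t * (S1 - 10 ^ 7) ^ 2 := by
      linarith [mul_nonneg htt (sq_nonneg (S1 - S0))]
    have h2 : (i + t) ^ 2 ≤ (1 - t) * i ^ 2 + t * (i + 1) ^ 2 := by linarith
    have h3 := mul_le_mul_of_nonneg_left a1 ht'
    have h4 := mul_le_mul_of_nonneg_left b1 ht0
    have : ((S0 + (S1 - S0) * t) / 10 ^ 7 - 1) ^ 2 =
      (S0 - 10 ^ 7 + (S1 - S0) * t) ^ 2 / 10 ^ 14 := by ring
    rw [this, div_le_iff₀ (by positivity)]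
    linarith

theorem strip_int {Q m : ℝ} (hQ0 : 864 / 10000 ≤ Q) (hQ : Q ≤ 8642724 / 10 ^ 8)
    (hm : m ≤ 48284272 / 10 ^ 7) (i : ℤ) (hi0 : 0 ≤ i) (hi : i + 1 ≤ 100)
    (n k : ℤ × ℤ × ℤ) (hok : stripOK i n k = true)
    (hint : IntervalIntegrable (Gf Q m) MeasureTheory.volume
      (188 / 10 ^ 5 * (i : ℝ)) (188 / 10 ^ 5 * ((i : ℝ) + 1))) :
    188 / (12252240 ^ 2 * 10 ^ 143) * (su (ig 0 (stripL n k)) : ℝ) ≤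
      ∫ x in (188 / 10 ^ 5 * (i : ℝ))..(188 / 10 ^ 5 * ((i : ℝ) + 1)), Gf Q m x := by
  have h1 : ∫ x in (188 / 10 ^ 5 * (i : ℝ))..(188 / 10 ^ 5 * ((i : ℝ) + 1)),
      (fun t => ev (stripL n k) t / (12252240 * 10 ^ 138)) (x / (188 / 10 ^ 5) - i) ≤
      ∫ x in (188 / 10 ^ 5 * (i : ℝ))..(188 / 10 ^ 5 * ((i : ℝ) + 1)), Gf Q m x := by
    apply intervalIntegral.integral_mono_on (by linarith) _ hint
    · intro x hx
      have e : x = 188 / 10 ^ 5 * (i + (x / (188 / 10 ^ 5) - i)) := by ring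
      have h := strip_pt hQ0 hQ hm i hi0 hi n k hok (x / (188 / 10 ^ 5) - i)
        (by rw [sub_nonneg, le_div_iff₀ (by norm_num)]; linarith [hx.1])
        (by rw [sub_le_iff_le_add, div_le_iff₀ (by norm_num)]; linarith [hx.2])
      rw [← e] at h
      exact h
    · apply Continuous.intervalIntegrable
      have := cont_ev (stripL n k)
      fun_prop
  generalize hg : (fun t => ev (stripL n k) t / (12252240 * 10 ^ 138)) = g at h1
  rw [intervalIntegral.integral_comp_div_sub g (by norm_num), ← hg,
    intervalIntegral.integral_div,
    mul_div_cancel_left₀ _ (by norm_num), mul_div_cancel_left₀ _ (by norm_num), sub_self,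
    add_sub_cancel_left, int_ev _ (by rw [stripL_length]; norm_num), smul_eq_mul] at h1
  refine le_trans (le_of_eq ?_) h1
  ring

theorem seg {Q m : ℝ} (hQ0 : 864 / 10000 ≤ Q) (hQ : Q ≤ 8642724 / 10 ^ 8)
    (hm : m ≤ 48284272 / 10 ^ 7)
    (hint : ∀ u v : ℝ, 0 ≤ u → u ≤ v → v ≤ 188 / 1000 →
      IntervalIntegrable (Gf Q m) MeasureTheory.volume u v) :
    ∀ (l : List (ℤ × ℤ × ℤ)) (n : ℤ × ℤ × ℤ) (i : ℤ), 0 ≤ i → i + l.length ≤ 100 →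
      allOK i (n :: l) = true →
      188 / (12252240 ^ 2 * 10 ^ 143) * (total (n :: l) : ℝ) ≤
      ∫ x in (188 / 10 ^ 5 * (i : ℝ))..(188 / 10 ^ 5 * ((i : ℝ) + l.length)), Gf Q m x
  | [], n, i, _, _, _ => by simp [total]
  | k :: l, n, i, hi0, hi, hok => by
    simp only [allOK, Bool.and_eq_true] at hok
    simp only [List.length_cons, Nat.cast_add, Nat.cast_one] at hi ⊢
    have hl : (0 : ℤ) ≤ l.length := by positivity
    have hir : (0 : ℝ) ≤ i := by exact_mod_cast hi0
    have hlr : (0 : ℝ) ≤ l.length := by positivity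
    have hirl : (i : ℝ) + (l.length + 1) ≤ 100 := by exact_mod_cast hi
    have ih := seg hQ0 hQ hm hint l k (i + 1) (by omega) (by omega) hok.2
    have I1 := hint (188 / 10 ^ 5 * (i : ℝ)) (188 / 10 ^ 5 * ((i : ℝ) + 1))
      (by positivity) (by linarith) (by linarith)
    have I2 := hint (188 / 10 ^ 5 * ((i : ℝ) + 1)) (188 / 10 ^ 5 * ((i : ℝ) + (l.length + 1)))
      (by positivity) (by linarith) (by linarith)
    have h1 := strip_int hQ0 hQ hm i hi0 (by omega) n k hok.1 I1
    rw [← intervalIntegral.integral_add_adjacent_intervals I1 I2]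
    have e : (((i + 1 : ℤ) : ℝ) + (l.length : ℝ)) = (i : ℝ) + (l.length + 1) := by
      push_cast; ring
    rw [e] at ih
    push_cast at ih
    rw [total, Int.cast_add, mul_add]
    exact add_le_add h1 ih

theorem prim_deriv (s c y : ℝ) (hy : 0 < y) :
    HasDerivAt (fun y : ℝ => y ^ 3 / 3 - (s + 1 + c) * y ^ 2 +
      ((s + 1 + c) ^ 2 + 2 * ((s + 1) * c)) * y -
      2 * (s + 1 + c) * ((s + 1) * c) * Real.log y - ((s + 1) * c) ^ 2 * y⁻¹)
      (((y - s - 1) * (y - c)) ^ 2 / y ^ 2) y := by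
  have h := ((((((hasDerivAt_pow 3 y).div_const 3).sub
    ((hasDerivAt_pow 2 y).const_mul (s + 1 + c))).add
    ((hasDerivAt_id y).const_mul ((s + 1 + c) ^ 2 + 2 * ((s + 1) * c)))).sub
    ((Real.hasDerivAt_log hy.ne').const_mul (2 * (s + 1 + c) * ((s + 1) * c)))).sub
    ((hasDerivAt_inv hy.ne').const_mul (((s + 1) * c) ^ 2)))
  refine h.congr_deriv ?_
  have := hy.ne'
  field_simp
  ring

theorem Gf_cont {Q m a : ℝ} (h1 : ∀ x ∈ Set.Icc 0 a, 0 < Q - x ^ 2)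
    (h2 : ∀ x ∈ Set.Icc 0 a, Q ≤ 1 - m * x) : ContinuousOn (Gf Q m) (Set.Icc 0 a) := by
  have hF : ∀ x ∈ Set.Icc 0 a, Gf Q m x =
      (fun s c e : ℝ => (e ^ 3 / 3 - (s + 1 + c) * e ^ 2 +
      ((s + 1 + c) ^ 2 + 2 * ((s + 1) * c)) * e -
      2 * (s + 1 + c) * ((s + 1) * c) * Real.log e - ((s + 1) * c) ^ 2 * e⁻¹) -
      (c ^ 3 / 3 - (s + 1 + c) * c ^ 2 +
      ((s + 1 + c) ^ 2 + 2 * ((s + 1) * c)) * c -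
      2 * (s + 1 + c) * ((s + 1) * c) * Real.log c - ((s + 1) * c) ^ 2 * c⁻¹))
      (√(1 - 22 * x ^ 2)) (√(Q - x ^ 2)) (√(1 - m * x - x ^ 2)) := by
    intro x hx
    have c0 : 0 < √(Q - x ^ 2) := Real.sqrt_pos.mpr (h1 x hx)
    have ce : √(Q - x ^ 2) ≤ √(1 - m * x - x ^ 2) :=
      Real.sqrt_le_sqrt (by linarith [h2 x hx])
    unfold Gf
    refine intervalIntegral.integral_eq_sub_of_hasDerivAt
      (fun y hy => prim_deriv _ _ y ?_) (f_cont _ _ _ _ c0 ce).intervalIntegrable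
    rw [Set.uIcc_of_le ce] at hy
    exact lt_of_lt_of_le c0 hy.1
  refine ContinuousOn.congr ?_ hF
  have k1 : ∀ x ∈ Set.Icc 0 a, √(Q - x ^ 2) ≠ 0 := fun x hx => (Real.sqrt_pos.mpr (h1 x hx)).ne'
  have k2 : ∀ x ∈ Set.Icc 0 a, √(1 - m * x - x ^ 2) ≠ 0 := fun x hx =>
    (Real.sqrt_pos.mpr (by linarith [h2 x hx, h1 x hx])).ne'
  have g1 : ContinuousOn (fun x : ℝ => √(Q - x ^ 2)) (Set.Icc 0 a) := by fun_prop
  have g2 : ContinuousOn (fun x : ℝ => √(1 - m * x - x ^ 2)) (Set.Icc 0 a) := by fun_prop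
  have g3 : ContinuousOn (fun x : ℝ => √(1 - 22 * x ^ 2)) (Set.Icc 0 a) := by fun_prop
  have l1 := g1.log k1
  have l2 := g2.log k2
  have i1 := g1.inv₀ k1
  have i2 := g2.inv₀ k2
  simp only
  fun_prop

theorem total_split : ∀ (k : ℕ) (l : List (ℤ × ℤ × ℤ)),
    total l = total (l.take (k + 1)) + total (l.drop k)
  | 0, [] => by simp [total]
  | 0, [_] => by simp [total]
  | 0, n :: m :: l => by simp [total]
  | k + 1, [] => by simp [total]
  | k + 1, [_] => by simp [total]
  | k + 1, n :: m :: l => by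
    have h := total_split k (m :: l)
    simp only [List.take_succ_cons, List.drop_succ_cons, total] at h ⊢
    rw [h]; ring

set_option maxRecDepth 100000

theorem data_ok : allOK 0 data = true := by decide +kernel

theorem data_len : data.length = 101 := by decide +kernel

theorem tot0 : 4361112589684 * 10 ^ 140 ≤ total ((data.drop 0).take 11) := by decide +kernel

theorem tot1 : 3968255630436 * 10 ^ 140 ≤ total ((data.drop 10).take 11) := by decide +kernel

theorem tot2 : 3529617850637 * 10 ^ 140 ≤ total ((data.drop 20).take 11) := by decide +kernel

theorem tot3 : 3053016230505 * 10 ^ 140 ≤ total ((data.drop 30).take 11) := by decide +kernel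

theorem tot4 : 2546264177709 * 10 ^ 140 ≤ total ((data.drop 40).take 11) := by decide +kernel

theorem tot5 : 2017871910454 * 10 ^ 140 ≤ total ((data.drop 50).take 11) := by decide +kernel

theorem tot6 : 1478465804513 * 10 ^ 140 ≤ total ((data.drop 60).take 11) := by decide +kernel

theorem tot7 : 944281039320 * 10 ^ 140 ≤ total ((data.drop 70).take 11) := by decide +kernel

theorem tot8 : 447932778383 * 10 ^ 140 ≤ total ((data.drop 80).take 11) := by decide +kernel

theorem tot9 : 82344198950 * 10 ^ 140 ≤ total ((data.drop 90).take 11) := by decide +kernel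

theorem tot_end : total (data.drop 100) = 0 := by decide +kernel

theorem total_ge : 28089 * (12252240 ^ 2 * 10 ^ 137) < 188 * total data := by
  have h0 := total_split 10 (data.drop 0)
  rw [List.drop_drop] at h0
  have h1 := total_split 10 (data.drop 10)
  rw [List.drop_drop] at h1
  have h2 := total_split 10 (data.drop 20)
  rw [List.drop_drop] at h2
  have h3 := total_split 10 (data.drop 30)
  rw [List.drop_drop] at h3
  have h4 := total_split 10 (data.drop 40)
  rw [List.drop_drop] at h4
  have h5 := total_split 10 (data.drop 50)
  rw [List.drop_drop] at h5
  have h6 := total_split 10 (data.drop 60)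
  rw [List.drop_drop] at h6
  have h7 := total_split 10 (data.drop 70)
  rw [List.drop_drop] at h7
  have h8 := total_split 10 (data.drop 80)
  rw [List.drop_drop] at h8
  have h9 := total_split 10 (data.drop 90)
  rw [List.drop_drop] at h9
  simp only [List.drop_zero, Nat.reduceAdd] at h0 h1 h2 h3 h4 h5 h6 h7 h8 h9
  have t0 := tot0
  rw [List.drop_zero] at t0
  have := tot_end
  linarith [tot1, tot2, tot3, tot4, tot5, tot6, tot7, tot8, tot9]

end Bolza

open Bolza in
/-- Lower bound `‖φ₁‖² > 28089/10⁶` for the squared hyperbolic `L²` norm of the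
test function `φ₁(x,y) = (y − √(1−22x²) − 1)(y − √(q²−x²))` over the hyperbolic
(2,4,8) triangle `Ω_T` in the upper half-plane (Section 3.3 of the paper). -/
theorem bolza_test_function_norm_lower_bound
    (q a : ℝ)
    (hq : q = Real.sqrt (3 + 2 * Real.sqrt 2 - 2 * Real.sqrt (4 + 3 * Real.sqrt 2)))
    (ha : a = (2 : ℝ) ^ ((1 : ℝ) / 4) - 1)
    (c₁ c₂ : ℝ → ℝ)
    (hc₁ : ∀ x : ℝ, c₁ x = Real.sqrt (q ^ 2 - x ^ 2))
    (hc₂ : ∀ x : ℝ, c₂ x = Real.sqrt ((1 / Real.sin (Real.pi / 8)) ^ 2 -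
        (x + Real.cos (Real.pi / 8) / Real.sin (Real.pi / 8)) ^ 2))
    (φ₁ : ℝ → ℝ → ℝ)
    (hφ₁ : ∀ x y : ℝ, φ₁ x y =
      (y - Real.sqrt (1 - 22 * x ^ 2) - 1) * (y - Real.sqrt (q ^ 2 - x ^ 2))) :
    28089 / 1000000 <
      ∫ x in (0 : ℝ)..a, ∫ y in (c₁ x)..(c₂ x), (φ₁ x y) ^ 2 / y ^ 2 := by
  obtain ⟨r, hr⟩ : ∃ r : ℝ, r = (2 : ℝ) ^ ((1 : ℝ) / 4) := ⟨_, rfl⟩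
  have r0 : 0 < r := by rw [hr]; positivity
  have r4 : r ^ 4 = 2 := by
    rw [hr, ← Real.rpow_natCast, ← Real.rpow_mul (by norm_num)]; norm_num
  have rlo : 1189207 / 10 ^ 6 < r := by
    by_contra h
    push Not at h
    have := pow_le_pow_left₀ r0.le h 4
    rw [r4] at this
    norm_num at this
  have rhi : r < 11892072 / 10 ^ 7 := by
    by_contra h
    push Not at h
    have := pow_le_pow_left₀ (by norm_num) h 4
    rw [r4] at this
    norm_num at this
  have rlo2 : 1189207115 / 10 ^ 9 < r := by
    by_contra h
    push Not at h
    have := pow_le_pow_left₀ r0.le h 4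
    rw [r4] at this
    norm_num at this
  have hs2 : √2 = r ^ 2 := by
    rw [Real.sqrt_eq_iff_mul_self_eq (by norm_num) (by positivity)]
    linarith [r4]
  have hs4 : √(4 + 3 * √2) = r + r ^ 3 := by
    rw [hs2, Real.sqrt_eq_iff_mul_self_eq (by positivity) (by positivity)]
    linear_combination -(2 + r ^ 2) * r4
  have slo : 141421356 / 10 ^ 8 < √2 := Real.lt_sqrt_of_sq_lt (by norm_num)
  have shi : √2 < 14142136 / 10 ^ 7 := by
    rw [Real.sqrt_lt' (by norm_num)]; norm_num
  obtain ⟨m, hmdef⟩ : ∃ m : ℝ, m = 2 * (1 + √2) := ⟨_, rfl⟩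
  have ham : a = r - 1 := by rw [ha, hr]
  have hQm : 3 + 2 * √2 - 2 * √(4 + 3 * √2) = 1 - m * a := by
    rw [hs4, hmdef, ham, hs2]; ring
  have a0 : 0 < a := by rw [ham]; linarith
  have hm : m ≤ 48284272 / 10 ^ 7 := by rw [hmdef]; linarith
  have hm0 : 482842712 / 10 ^ 8 ≤ m := by rw [hmdef]; linarith
  have alo : 189207115 / 10 ^ 9 ≤ a := by rw [ham]; linarith
  have ahi : a ≤ 1892072 / 10 ^ 7 := by rw [ham]; linarith
  have hQpos : 0 ≤ 1 - m * a := by nlinarith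
  have hq2 : q ^ 2 = 1 - m * a := by
    rw [hq, hQm, Real.sq_sqrt hQpos]
  have hQlo : 864 / 10000 ≤ q ^ 2 := by rw [hq2]; nlinarith
  have hQhi : q ^ 2 ≤ 8642724 / 10 ^ 8 := by
    rw [hq2]
    have h := mul_le_mul hm0 alo (by norm_num) (by linarith)
    norm_num at h ⊢
    linarith
  -- trigonometry
  have hsin : 0 < Real.sin (Real.pi / 8) :=
    Real.sin_pos_of_pos_of_lt_pi (by positivity) (by linarith [Real.pi_pos])
  have hcos : 0 < Real.cos (Real.pi / 8) :=
    Real.cos_pos_of_mem_Ioo ⟨by linarith [Real.pi_pos], by linarith [Real.pi_pos]⟩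
  have hcs : Real.cos (Real.pi / 8) = (1 + √2) * Real.sin (Real.pi / 8) := by
    have e : √2 ^ 2 = 2 := Real.sq_sqrt (by norm_num)
    have h1 : Real.sin (Real.pi / 8) ^ 2 = (2 - √2) / 4 := by
      rw [Real.sin_pi_div_eight, div_pow, Real.sq_sqrt (by linarith)]; norm_num
    have h2 : Real.cos (Real.pi / 8) ^ 2 = (2 + √2) / 4 := by
      rw [Real.cos_pi_div_eight, div_pow, Real.sq_sqrt (by linarith)]; norm_num
    have h3 : Real.cos (Real.pi / 8) ^ 2 = ((1 + √2) * Real.sin (Real.pi / 8)) ^ 2 := by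
      rw [mul_pow, h1, h2]; linear_combination (√2 / 4) * e
    exact (pow_left_inj₀ hcos.le (by positivity) (by norm_num)).mp h3
  have htrig : ∀ x : ℝ, (1 / Real.sin (Real.pi / 8)) ^ 2 -
      (x + Real.cos (Real.pi / 8) / Real.sin (Real.pi / 8)) ^ 2 = 1 - m * x - x ^ 2 := by
    intro x
    have h1 := Real.sin_sq_add_cos_sq (Real.pi / 8)
    rw [hcs] at h1 ⊢
    rw [mul_div_cancel_right₀ _ hsin.ne', hmdef]
    have h2 : (1 / Real.sin (Real.pi / 8)) ^ 2 = 1 + (1 + √2) ^ 2 := by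
      field_simp
      linarith
    rw [h2]; ring
  have hG : (fun x => ∫ y in (c₁ x)..(c₂ x), (φ₁ x y) ^ 2 / y ^ 2) = Gf (q ^ 2) m := by
    funext x
    simp only [hc₁, hc₂, hφ₁, htrig, Gf]
  rw [hG]
  have hpos : ∀ x ∈ Set.Icc 0 a, 0 < q ^ 2 - x ^ 2 := by
    intro x hx
    have := pow_le_pow_left₀ hx.1 (hx.2.trans ahi) 2
    norm_num at this
    linarith
  have hle : ∀ x ∈ Set.Icc 0 a, q ^ 2 ≤ 1 - m * x := by
    intro x hx
    rw [hq2]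
    have := mul_le_mul_of_nonneg_left hx.2 (show 0 ≤ m by linarith)
    linarith
  have hcont := Gf_cont hpos hle
  have hint : ∀ u v : ℝ, 0 ≤ u → u ≤ v → v ≤ a →
      IntervalIntegrable (Gf (q ^ 2) m) MeasureTheory.volume u v := by
    intro u v hu huv hv
    apply ContinuousOn.intervalIntegrable
    rw [Set.uIcc_of_le huv]
    exact hcont.mono (Set.Icc_subset_Icc hu hv)
  have hdata : ∃ n l, data = n :: l ∧ l.length = 100 := by
    have hl := data_len
    cases hd : data with
    | nil => rw [hd] at hl; simp at hl
    | cons n l => exact ⟨n, l, rfl, by rw [hd] at hl; simpa using hl⟩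
  obtain ⟨n, l, hd, hl⟩ := hdata
  have hok := data_ok
  have htot := total_ge
  rw [hd] at hok htot
  have hseg := seg hQlo hQhi hm (fun u v hu huv hv => hint u v hu huv (by linarith)) l n 0
    (by norm_num) (by rw [hl]; norm_num) hok
  have htotr : (28089 * (12252240 ^ 2 * 10 ^ 137) : ℝ) < 188 * (total (n :: l) : ℝ) := by
    exact_mod_cast htot
  rw [hl] at hseg
  norm_num only [Int.cast_zero, mul_zero, zero_add, Nat.cast_ofNat] at hseg
  have hmono : ∫ x in (0 : ℝ)..(47 / 250), Gf (q ^ 2) m x ≤ ∫ x in (0 : ℝ)..a, Gf (q ^ 2) m x := by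
    rw [← intervalIntegral.integral_add_adjacent_intervals
      (hint 0 (47 / 250) le_rfl (by norm_num) (by linarith))
      (hint (47 / 250) a (by norm_num) (by linarith) le_rfl)]
    have : 0 ≤ ∫ x in (47 / 250 : ℝ)..a, Gf (q ^ 2) m x := by
      apply intervalIntegral.integral_nonneg (by linarith)
      intro x hx
      have hx' : x ∈ Set.Icc 0 a := ⟨by linarith [hx.1], hx.2⟩
      unfold Gf
      apply intervalIntegral.integral_nonneg
      · exact Real.sqrt_le_sqrt (by linarith [hle x hx'])
      · intro y _; positivity
    linarith
  refine lt_of_lt_of_le ?_ (hseg.trans hmono)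
  generalize (total (n :: l) : ℝ) = T at htotr ⊢
  norm_num at htotr ⊢
  linarith
end
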